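/- Let (A, {,}, d) be a differential graded Poisson algebra over a field k. Then (A^e, ∂), together with the DGA map m : A → A^e, a ↦ m_a, and the DG Lie algebra map h : (A,{,},d) → (A^e,[,],∂), a ↦ h_a, is a universal enveloping algebra of A: for every differential graded algebra (D,δ) with a DGA map f : A → D and a DG Lie algebra map g : A → (D,[,],δ) satisfying f({a,b}) = g(a)f(b) - (-1)^{|a||b|}f(b)g(a) and g(ab) = f(a)g(b) + (-1)^{|a||b|}f(b)g(a) for all homogeneous a,b ∈ A, there exists a unique DGA map φ : A^e → D with φ∘m = f and φ∘h = g. -/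

import Mathlib

open scoped TensorProduct

noncomputable section

namespace DGPaper

universe u

/-- A differential graded Lie algebra structure on a `k`-vector space `V`. -/
structure DGLAOn (k : Type u) [Field k] (V : Type u) [AddCommGroup V] [Module k V] where
  gr : ℤ → Submodule k V
  decomp : DirectSum.Decomposition gr
  br : V →ₗ[k] V →ₗ[k] V
  br_mem : ∀ {i j : ℤ} {a b : V}, a ∈ gr i → b ∈ gr j → br a b ∈ gr (i + j)
  br_antisymm : ∀ {i j : ℤ} {a b : V}, a ∈ gr i → b ∈ gr j →
    br a b = -(((-1 : k) ^ (i * j)) • br b a)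
  br_jacobi : ∀ {i j l : ℤ} {a b c : V}, a ∈ gr i → b ∈ gr j → c ∈ gr l →
    br a (br b c) = br (br a b) c + ((-1 : k) ^ (i * j)) • br b (br a c)
  d : V →ₗ[k] V
  d_mem : ∀ {i : ℤ} {a : V}, a ∈ gr i → d a ∈ gr (i + 1)
  d_sq : ∀ a : V, d (d a) = 0
  d_br : ∀ {i j : ℤ} {a b : V}, a ∈ gr i → b ∈ gr j →
    d (br a b) = br (d a) b + ((-1 : k) ^ i) • br a (d b)

/-- A differential graded (associative, unital) algebra structure on a `k`-vector space `N`. -/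
structure DGAOn (k : Type u) [Field k] (N : Type u) [AddCommGroup N] [Module k N] where
  gr : ℤ → Submodule k N
  decomp : DirectSum.Decomposition gr
  mul : N →ₗ[k] N →ₗ[k] N
  one : N
  one_mem : one ∈ gr 0
  mul_mem : ∀ {i j : ℤ} {a b : N}, a ∈ gr i → b ∈ gr j → mul a b ∈ gr (i + j)
  mul_assoc : ∀ a b c : N, mul (mul a b) c = mul a (mul b c)
  one_mul : ∀ a : N, mul one a = a
  mul_one : ∀ a : N, mul a one = a
  d : N →ₗ[k] N
  d_mem : ∀ {i : ℤ} {a : N}, a ∈ gr i → d a ∈ gr (i + 1)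
  d_sq : ∀ a : N, d (d a) = 0
  d_mul : ∀ {i j : ℤ} {a b : N}, a ∈ gr i → b ∈ gr j →
    d (mul a b) = mul (d a) b + ((-1 : k) ^ i) • mul a (d b)

/-- A differential graded Poisson algebra structure on a `k`-vector space `M`. -/
structure DGPAOn (k : Type u) [Field k] (M : Type u) [AddCommGroup M] [Module k M] where
  gr : ℤ → Submodule k M
  decomp : DirectSum.Decomposition gr
  mul : M →ₗ[k] M →ₗ[k] M
  one : M
  one_mem : one ∈ gr 0
  mul_mem : ∀ {i j : ℤ} {a b : M}, a ∈ gr i → b ∈ gr j → mul a b ∈ gr (i + j)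
  mul_assoc : ∀ a b c : M, mul (mul a b) c = mul a (mul b c)
  one_mul : ∀ a : M, mul one a = a
  mul_one : ∀ a : M, mul a one = a
  mul_comm : ∀ {i j : ℤ} {a b : M}, a ∈ gr i → b ∈ gr j →
    mul a b = ((-1 : k) ^ (i * j)) • mul b a
  br : M →ₗ[k] M →ₗ[k] M
  br_mem : ∀ {i j : ℤ} {a b : M}, a ∈ gr i → b ∈ gr j → br a b ∈ gr (i + j)
  br_antisymm : ∀ {i j : ℤ} {a b : M}, a ∈ gr i → b ∈ gr j →
    br a b = -(((-1 : k) ^ (i * j)) • br b a)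
  br_jacobi : ∀ {i j l : ℤ} {a b c : M}, a ∈ gr i → b ∈ gr j → c ∈ gr l →
    br a (br b c) = br (br a b) c + ((-1 : k) ^ (i * j)) • br b (br a c)
  br_deriv : ∀ {i j l : ℤ} {a b c : M}, a ∈ gr i → b ∈ gr j → c ∈ gr l →
    br a (mul b c) = mul (br a b) c + ((-1 : k) ^ (i * j)) • mul b (br a c)
  d : M →ₗ[k] M
  d_mem : ∀ {i : ℤ} {a : M}, a ∈ gr i → d a ∈ gr (i + 1)
  d_sq : ∀ a : M, d (d a) = 0
  d_br : ∀ {i j : ℤ} {a b : M}, a ∈ gr i → b ∈ gr j →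
    d (br a b) = br (d a) b + ((-1 : k) ^ i) • br a (d b)
  d_mul : ∀ {i j : ℤ} {a b : M}, a ∈ gr i → b ∈ gr j →
    d (mul a b) = mul (d a) b + ((-1 : k) ^ i) • mul a (d b)

section Defs

variable {k : Type u} [Field k]

/-- The differential graded Lie algebra underlying a differential graded Poisson algebra. -/
def DGPAOn.toLie {M : Type u} [AddCommGroup M] [Module k M] (P : DGPAOn k M) :
    DGLAOn k M where
  gr := P.gr
  decomp := P.decomp
  br := P.br
  br_mem := P.br_mem
  br_antisymm := P.br_antisymm
  br_jacobi := P.br_jacobi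
  d := P.d
  d_mem := P.d_mem
  d_sq := P.d_sq
  d_br := P.d_br

section Maps

variable {M N : Type u} [AddCommGroup M] [Module k M] [AddCommGroup N] [Module k N]

/-- A morphism of differential graded algebras (degree-0, multiplicative, unital,
commuting with the differentials). -/
def IsDGAHom (E : DGAOn k M) (F : DGAOn k N) (f : M →ₗ[k] N) : Prop :=
  (∀ {n : ℤ} {x : M}, x ∈ E.gr n → f x ∈ F.gr n) ∧
  (∀ x y : M, f (E.mul x y) = F.mul (f x) (f y)) ∧
  f E.one = F.one ∧
  ∀ x : M, f (E.d x) = F.d (f x)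

/-- A morphism of differential graded Poisson algebras. -/
def IsDGPAHom (P : DGPAOn k M) (Q : DGPAOn k N) (f : M →ₗ[k] N) : Prop :=
  (∀ {n : ℤ} {x : M}, x ∈ P.gr n → f x ∈ Q.gr n) ∧
  (∀ x y : M, f (P.mul x y) = Q.mul (f x) (f y)) ∧
  f P.one = Q.one ∧
  (∀ x : M, f (P.d x) = Q.d (f x)) ∧
  ∀ x y : M, f (P.br x y) = Q.br (f x) (f y)

end Maps

section Tensor

variable {A B : Type u} [AddCommGroup A] [Module k A] [AddCommGroup B] [Module k B]

/-- `R` is the tensor product differential graded Poisson algebra structure on `A ⊗[k] B`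
induced by `P` and `Q`. -/
def IsTensorDGPA (P : DGPAOn k A) (Q : DGPAOn k B) (R : DGPAOn k (A ⊗[k] B)) : Prop :=
  (∀ n : ℤ, R.gr n = Submodule.span k {z : A ⊗[k] B |
      ∃ (i j : ℤ) (a : A) (b : B), i + j = n ∧ a ∈ P.gr i ∧ b ∈ Q.gr j ∧ z = a ⊗ₜ[k] b}) ∧
  R.one = P.one ⊗ₜ[k] Q.one ∧
  (∀ {i j i' j' : ℤ} {a a' : A} {b b' : B},
      a ∈ P.gr i → b ∈ Q.gr j → a' ∈ P.gr i' → b' ∈ Q.gr j' →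
    R.mul (a ⊗ₜ[k] b) (a' ⊗ₜ[k] b') = ((-1 : k) ^ (i' * j)) • (P.mul a a' ⊗ₜ[k] Q.mul b b')) ∧
  (∀ {i j : ℤ} {a : A} {b : B}, a ∈ P.gr i → b ∈ Q.gr j →
    R.d (a ⊗ₜ[k] b) = P.d a ⊗ₜ[k] b + ((-1 : k) ^ i) • (a ⊗ₜ[k] Q.d b)) ∧
  (∀ {i j i' j' : ℤ} {a a' : A} {b b' : B},
      a ∈ P.gr i → b ∈ Q.gr j → a' ∈ P.gr i' → b' ∈ Q.gr j' →
    R.br (a ⊗ₜ[k] b) (a' ⊗ₜ[k] b') =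
      ((-1 : k) ^ (i' * j)) • (P.br a a' ⊗ₜ[k] Q.mul b b' + P.mul a a' ⊗ₜ[k] Q.br b b'))

/-- `G` is the tensor product differential graded algebra structure on `A ⊗[k] B`
induced by `E` and `F` (with the Koszul sign rule). -/
def IsTensorDGA (E : DGAOn k A) (F : DGAOn k B) (G : DGAOn k (A ⊗[k] B)) : Prop :=
  (∀ n : ℤ, G.gr n = Submodule.span k {z : A ⊗[k] B |
      ∃ (i j : ℤ) (x : A) (y : B), i + j = n ∧ x ∈ E.gr i ∧ y ∈ F.gr j ∧ z = x ⊗ₜ[k] y}) ∧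
  G.one = E.one ⊗ₜ[k] F.one ∧
  (∀ {i j i' j' : ℤ} {x x' : A} {y y' : B},
      x ∈ E.gr i → y ∈ F.gr j → x' ∈ E.gr i' → y' ∈ F.gr j' →
    G.mul (x ⊗ₜ[k] y) (x' ⊗ₜ[k] y') = ((-1 : k) ^ (i' * j)) • (E.mul x x' ⊗ₜ[k] F.mul y y')) ∧
  (∀ {i j : ℤ} {x : A} {y : B}, x ∈ E.gr i → y ∈ F.gr j →
    G.d (x ⊗ₜ[k] y) = E.d x ⊗ₜ[k] y + ((-1 : k) ^ i) • (x ⊗ₜ[k] F.d y))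

end Tensor

section Env

variable {M : Type u} [AddCommGroup M] [Module k M]

/-- The defining relations of the universal enveloping algebra `A^e` of a differential
graded Poisson algebra, imposed on the tensor algebra of `M × M`; the first copy of `M`
gives the generators `m_a`, the second copy the generators `h_a`. -/
inductive EnvRel (P : DGPAOn k M) :
    TensorAlgebra k (M × M) → TensorAlgebra k (M × M) → Prop
  | relone : EnvRel P (TensorAlgebra.ι k ((P.one, 0) : M × M)) 1
  | relmul (a b : M) :
      EnvRel P (TensorAlgebra.ι k ((P.mul a b, 0) : M × M))
        (TensorAlgebra.ι k ((a, 0) : M × M) * TensorAlgebra.ι k ((b, 0) : M × M))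
  | relhmul {i j : ℤ} {a b : M} (ha : a ∈ P.gr i) (hb : b ∈ P.gr j) :
      EnvRel P (TensorAlgebra.ι k ((0, P.mul a b) : M × M))
        (TensorAlgebra.ι k ((a, 0) : M × M) * TensorAlgebra.ι k ((0, b) : M × M) +
          ((-1 : k) ^ (i * j)) •
            (TensorAlgebra.ι k ((b, 0) : M × M) * TensorAlgebra.ι k ((0, a) : M × M)))
  | relmbr {i j : ℤ} {a b : M} (ha : a ∈ P.gr i) (hb : b ∈ P.gr j) :
      EnvRel P (TensorAlgebra.ι k ((P.br a b, 0) : M × M))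
        (TensorAlgebra.ι k ((0, a) : M × M) * TensorAlgebra.ι k ((b, 0) : M × M) -
          ((-1 : k) ^ (i * j)) •
            (TensorAlgebra.ι k ((b, 0) : M × M) * TensorAlgebra.ι k ((0, a) : M × M)))
  | relhbr {i j : ℤ} {a b : M} (ha : a ∈ P.gr i) (hb : b ∈ P.gr j) :
      EnvRel P (TensorAlgebra.ι k ((0, P.br a b) : M × M))
        (TensorAlgebra.ι k ((0, a) : M × M) * TensorAlgebra.ι k ((0, b) : M × M) -
          ((-1 : k) ^ (i * j)) •
            (TensorAlgebra.ι k ((0, b) : M × M) * TensorAlgebra.ι k ((0, a) : M × M)))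

/-- The universal enveloping algebra `A^e` of a differential graded Poisson algebra,
as a quotient of the tensor algebra on two copies of `A`. -/
abbrev Env (P : DGPAOn k M) : Type u := RingQuot (EnvRel P)

/-- The generators `m_a` of `A^e`. -/
def mgen (P : DGPAOn k M) : M →ₗ[k] Env P :=
  (RingQuot.mkAlgHom k (EnvRel P)).toLinearMap ∘ₗ
    ((TensorAlgebra.ι k : (M × M) →ₗ[k] TensorAlgebra k (M × M)) ∘ₗ LinearMap.inl k M M)

/-- The generators `h_a` of `A^e`. -/
def hgen (P : DGPAOn k M) : M →ₗ[k] Env P :=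
  (RingQuot.mkAlgHom k (EnvRel P)).toLinearMap ∘ₗ
    ((TensorAlgebra.ι k : (M × M) →ₗ[k] TensorAlgebra k (M × M)) ∘ₗ LinearMap.inr k M M)

/-- `E` is the differential graded algebra structure on `A^e`, with the ring
multiplication of `A^e`, grading `|m_a| = |h_a| = |a|` and differential determined by
`∂(m_a) = m_{d a}`, `∂(h_a) = h_{d a}` and the graded Leibniz rule. -/
def IsEnvDGA (P : DGPAOn k M) (E : DGAOn k (Env P)) : Prop :=
  (∀ x y : Env P, E.mul x y = x * y) ∧
  E.one = 1 ∧
  (∀ {i : ℤ} {a : M}, a ∈ P.gr i → mgen P a ∈ E.gr i) ∧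
  (∀ {i : ℤ} {a : M}, a ∈ P.gr i → hgen P a ∈ E.gr i) ∧
  (∀ a : M, E.d (mgen P a) = mgen P (P.d a)) ∧
  (∀ a : M, E.d (hgen P a) = hgen P (P.d a))

end Env

section Lie

variable {V : Type u} [AddCommGroup V] [Module k V]

/-- The defining relations of the universal enveloping algebra of a differential graded
Lie algebra. -/
inductive LieRel (L : DGLAOn k V) : TensorAlgebra k V → TensorAlgebra k V → Prop
  | rel {i j : ℤ} {a b : V} (ha : a ∈ L.gr i) (hb : b ∈ L.gr j) :
      LieRel L
        (TensorAlgebra.ι k a * TensorAlgebra.ι k b -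
          ((-1 : k) ^ (i * j)) • (TensorAlgebra.ι k b * TensorAlgebra.ι k a))
        (TensorAlgebra.ι k (L.br a b))

/-- The universal enveloping algebra `U(L)` of a differential graded Lie algebra `L`. -/
abbrev ULie (L : DGLAOn k V) : Type u := RingQuot (LieRel L)

/-- The canonical map `L → U(L)`. -/
def uGen (L : DGLAOn k V) : V →ₗ[k] ULie L :=
  (RingQuot.mkAlgHom k (LieRel L)).toLinearMap ∘ₗ TensorAlgebra.ι k

/-- `E` is the differential graded algebra structure of `U(L)`. -/
def IsULieDGA (L : DGLAOn k V) (E : DGAOn k (ULie L)) : Prop :=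
  (∀ x y : ULie L, E.mul x y = x * y) ∧
  E.one = 1 ∧
  (∀ {i : ℤ} {a : V}, a ∈ L.gr i → uGen L a ∈ E.gr i) ∧
  (∀ a : V, E.d (uGen L a) = uGen L (L.d a))

/-- The graded-symmetry relations defining the graded symmetric algebra of `L`. -/
inductive SymRel (L : DGLAOn k V) : TensorAlgebra k V → TensorAlgebra k V → Prop
  | rel {i j : ℤ} {a b : V} (ha : a ∈ L.gr i) (hb : b ∈ L.gr j) :
      SymRel L (TensorAlgebra.ι k a * TensorAlgebra.ι k b)
        (((-1 : k) ^ (i * j)) • (TensorAlgebra.ι k b * TensorAlgebra.ι k a))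

/-- The graded symmetric algebra `𝕊L` of a differential graded Lie algebra `L`. -/
abbrev SymAlg (L : DGLAOn k V) : Type u := RingQuot (SymRel L)

/-- The canonical map `L → 𝕊L`. -/
def sGen (L : DGLAOn k V) : V →ₗ[k] SymAlg L :=
  (RingQuot.mkAlgHom k (SymRel L)).toLinearMap ∘ₗ TensorAlgebra.ι k

/-- `R` is the differential graded Poisson algebra structure on `𝕊L` with differential
extending `d` and bracket extending the Lie bracket of `L` as a graded biderivation. -/
def IsSymDGPA (L : DGLAOn k V) (R : DGPAOn k (SymAlg L)) : Prop :=
  (∀ x y : SymAlg L, R.mul x y = x * y) ∧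
  R.one = 1 ∧
  (∀ {i : ℤ} {a : V}, a ∈ L.gr i → sGen L a ∈ R.gr i) ∧
  (∀ a : V, R.d (sGen L a) = sGen L (L.d a)) ∧
  (∀ a b : V, R.br (sGen L a) (sGen L b) = sGen L (L.br a b))

/-- `S` is the graded semidirect product differential graded Lie algebra `L ⋊ L`. -/
def IsSemidirect (L : DGLAOn k V) (S : DGLAOn k (V × V)) : Prop :=
  (∀ n : ℤ, S.gr n = (L.gr n).prod (L.gr n)) ∧
  (∀ z : V × V, S.d z = (L.d z.1, L.d z.2)) ∧
  (∀ {i j : ℤ} {x₁ x₂ y₁ y₂ : V}, x₁ ∈ L.gr i → x₂ ∈ L.gr i → y₁ ∈ L.gr j → y₂ ∈ L.gr j →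
    S.br (x₁, x₂) (y₁, y₂) =
      (L.br x₂ y₁ - ((-1 : k) ^ (i * j)) • L.br y₂ x₁, L.br x₂ y₂))

end Lie

section Smash

variable {M : Type u} [AddCommGroup M] [Module k M]

/-- The generators `1#(ab) - a#b - (-1)^{|a||b|} b#a` of the ideal defining `A^E`
inside the smash product `A # U(A)`. -/
def smashGens (P : DGPAOn k M) : Set (M ⊗[k] ULie P.toLie) :=
  {z | ∃ (i j : ℤ) (a b : M), a ∈ P.gr i ∧ b ∈ P.gr j ∧
    z = P.one ⊗ₜ[k] uGen P.toLie (P.mul a b) - a ⊗ₜ[k] uGen P.toLie b -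
        ((-1 : k) ^ (i * j)) • (b ⊗ₜ[k] uGen P.toLie a)}

/-- The two-sided ideal generated by a set `T` in a differential graded algebra `S`. -/
def idealGen {N : Type u} [AddCommGroup N] [Module k N] (S : DGAOn k N) (T : Set N) :
    Submodule k N :=
  sInf {I : Submodule k N | T ⊆ I ∧ ∀ x ∈ I, ∀ y : N, S.mul x y ∈ I ∧ S.mul y x ∈ I}

/-- `S` is the smash product differential graded algebra `A # U(A)`. -/
def IsSmash (P : DGPAOn k M) (EU : DGAOn k (ULie P.toLie))
    (S : DGAOn k (M ⊗[k] ULie P.toLie)) : Prop :=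
  S.one = P.one ⊗ₜ[k] (1 : ULie P.toLie) ∧
  (∀ a b : M, S.mul (a ⊗ₜ[k] (1 : ULie P.toLie)) (b ⊗ₜ[k] (1 : ULie P.toLie)) =
      P.mul a b ⊗ₜ[k] (1 : ULie P.toLie)) ∧
  (∀ u v : ULie P.toLie, S.mul (P.one ⊗ₜ[k] u) (P.one ⊗ₜ[k] v) = P.one ⊗ₜ[k] (u * v)) ∧
  (∀ (a : M) (u : ULie P.toLie), S.mul (a ⊗ₜ[k] (1 : ULie P.toLie)) (P.one ⊗ₜ[k] u) =
      a ⊗ₜ[k] u) ∧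
  (∀ {i j : ℤ} {c b : M}, c ∈ P.gr i → b ∈ P.gr j →
    S.mul (P.one ⊗ₜ[k] uGen P.toLie c) (b ⊗ₜ[k] (1 : ULie P.toLie)) =
      P.br c b ⊗ₜ[k] (1 : ULie P.toLie) + ((-1 : k) ^ (i * j)) • (b ⊗ₜ[k] uGen P.toLie c)) ∧
  (∀ {i j : ℤ} {a : M} {u : ULie P.toLie}, a ∈ P.gr i → u ∈ EU.gr j →
      a ⊗ₜ[k] u ∈ S.gr (i + j)) ∧
  (∀ {i : ℤ} {a : M}, a ∈ P.gr i → ∀ u : ULie P.toLie,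
    S.d (a ⊗ₜ[k] u) = P.d a ⊗ₜ[k] u + ((-1 : k) ^ i) • (a ⊗ₜ[k] EU.d u))

/-- `R` is the quotient differential graded algebra structure of `S` by the ideal `I`. -/
def IsQuotDGA {N : Type u} [AddCommGroup N] [Module k N] (S : DGAOn k N)
    (I : Submodule k N) (R : DGAOn k (N ⧸ I)) : Prop :=
  (∀ n : ℤ, R.gr n = Submodule.map I.mkQ (S.gr n)) ∧
  R.one = I.mkQ S.one ∧
  (∀ x y : N, R.mul (I.mkQ x) (I.mkQ y) = I.mkQ (S.mul x y)) ∧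
  (∀ x : N, R.d (I.mkQ x) = I.mkQ (S.d x))

end Smash

section Op

variable {M N : Type u} [AddCommGroup M] [Module k M] [AddCommGroup N] [Module k N]

/-- `P'` is the opposite differential graded Poisson algebra of `P` (the product is
unchanged by graded commutativity, the bracket is negated). -/
def IsOpDGPA (P P' : DGPAOn k M) : Prop :=
  P'.gr = P.gr ∧ (∀ x y : M, P'.mul x y = P.mul x y) ∧ P'.one = P.one ∧ P'.d = P.d ∧
  (∀ x y : M, P'.br x y = - P.br x y)

/-- `E'` is the opposite differential graded algebra of `E` (with the Koszul sign). -/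
def IsOpDGA (E E' : DGAOn k N) : Prop :=
  E'.gr = E.gr ∧ E'.one = E.one ∧ E'.d = E.d ∧
  (∀ {i j : ℤ} {x y : N}, x ∈ E.gr i → y ∈ E.gr j →
    E'.mul x y = ((-1 : k) ^ (i * j)) • E.mul y x)

end Op

section UEnv

variable {M N : Type u} [AddCommGroup M] [Module k M] [AddCommGroup N] [Module k N]

/-- A pair `(f, g)` where `f : A → D` is a differential graded algebra map and
`g : A → D_L` is a differential graded Lie algebra map (into the graded commutator Lie
structure of `D`), satisfying the two compatibility conditions of the universal property
of the universal enveloping algebra of a differential graded Poisson algebra. -/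
def UEPair (P : DGPAOn k M) (D : DGAOn k N) (f g : M →ₗ[k] N) : Prop :=
  (∀ {n : ℤ} {x : M}, x ∈ P.gr n → f x ∈ D.gr n) ∧
  (∀ {n : ℤ} {x : M}, x ∈ P.gr n → g x ∈ D.gr n) ∧
  (∀ a b : M, f (P.mul a b) = D.mul (f a) (f b)) ∧
  f P.one = D.one ∧
  (∀ a : M, f (P.d a) = D.d (f a)) ∧
  (∀ a : M, g (P.d a) = D.d (g a)) ∧
  (∀ {i j : ℤ} {a b : M}, a ∈ P.gr i → b ∈ P.gr j →
    g (P.br a b) = D.mul (g a) (g b) - ((-1 : k) ^ (i * j)) • D.mul (g b) (g a)) ∧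
  (∀ {i j : ℤ} {a b : M}, a ∈ P.gr i → b ∈ P.gr j →
    f (P.br a b) = D.mul (g a) (f b) - ((-1 : k) ^ (i * j)) • D.mul (f b) (g a)) ∧
  (∀ {i j : ℤ} {a b : M}, a ∈ P.gr i → b ∈ P.gr j →
    g (P.mul a b) = D.mul (f a) (g b) + ((-1 : k) ^ (i * j)) • D.mul (f b) (g a))

/-- `(E, α, β)` is a universal enveloping algebra of the differential graded Poisson
algebra `P`. -/
def IsUEnv (P : DGPAOn k M) (E : DGAOn k N) (α β : M →ₗ[k] N) : Prop :=
  UEPair P E α β ∧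
  ∀ (D' : Type u) [AddCommGroup D'] [Module k D'] (D : DGAOn k D') (f g : M →ₗ[k] D'),
    UEPair P D f g →
    ∃! φ : N →ₗ[k] D',
      IsDGAHom E D φ ∧ (∀ a : M, φ (α a) = f a) ∧ (∀ a : M, φ (β a) = g a)

end UEnv

section IdealsQuotients

variable {M : Type u} [AddCommGroup M] [Module k M]

/-- `B` is a differential graded Poisson ideal of `P`. -/
def IsDGPIdeal (P : DGPAOn k M) (B : Submodule k M) : Prop :=
  (B = ⨆ n : ℤ, B ⊓ P.gr n) ∧
  (∀ x ∈ B, P.d x ∈ B) ∧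
  (∀ x ∈ B, ∀ a : M, P.mul x a ∈ B) ∧
  (∀ x ∈ B, ∀ a : M, P.mul a x ∈ B) ∧
  (∀ x ∈ B, ∀ a : M, P.br a x ∈ B)

/-- `B` is a differential graded Poisson subalgebra of `P`. -/
def IsDGPSubalg (P : DGPAOn k M) (B : Submodule k M) : Prop :=
  (B = ⨆ n : ℤ, B ⊓ P.gr n) ∧ P.one ∈ B ∧
  (∀ x ∈ B, ∀ y ∈ B, P.mul x y ∈ B) ∧
  (∀ x ∈ B, P.d x ∈ B) ∧
  (∀ x ∈ B, ∀ y ∈ B, P.br x y ∈ B)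

/-- `R` is the quotient differential graded Poisson algebra structure on `M ⧸ B`. -/
def IsQuotDGPA (P : DGPAOn k M) (B : Submodule k M) (R : DGPAOn k (M ⧸ B)) : Prop :=
  (∀ n : ℤ, R.gr n = Submodule.map B.mkQ (P.gr n)) ∧
  R.one = B.mkQ P.one ∧
  (∀ x y : M, R.mul (B.mkQ x) (B.mkQ y) = B.mkQ (P.mul x y)) ∧
  (∀ x : M, R.d (B.mkQ x) = B.mkQ (P.d x)) ∧
  (∀ x y : M, R.br (B.mkQ x) (B.mkQ y) = B.mkQ (P.br x y))

/-- `S` is the differential graded Poisson algebra structure induced on a differential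
graded Poisson subalgebra `B` of `P`. -/
def IsSubDGPA (P : DGPAOn k M) (B : Submodule k M) (S : DGPAOn k B) : Prop :=
  (∀ n : ℤ, S.gr n = Submodule.comap B.subtype (P.gr n)) ∧
  ((S.one : M) = P.one) ∧
  (∀ x y : B, (S.mul x y : M) = P.mul (x : M) (y : M)) ∧
  (∀ x : B, (S.d x : M) = P.d (x : M)) ∧
  (∀ x y : B, (S.br x y : M) = P.br (x : M) (y : M))

/-- The cocycles `ker d` of a differential graded Poisson algebra. -/
def Cocycles (P : DGPAOn k M) : Submodule k M := LinearMap.ker P.d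

/-- The coboundaries `im d`, viewed inside the cocycles. -/
def CobIn (P : DGPAOn k M) : Submodule k (Cocycles P) :=
  Submodule.comap (Cocycles P).subtype (LinearMap.range P.d)

/-- The cohomology `H(A) = ker d / im d` of a differential graded Poisson algebra. -/
abbrev Cohom (P : DGPAOn k M) : Type u := Cocycles P ⧸ CobIn P

/-- The class map `ker d → H(A)`. -/
def cohCls (P : DGPAOn k M) : Cocycles P →ₗ[k] Cohom P := (CobIn P).mkQ

/-- `R` is the graded Poisson algebra structure on the cohomology of `P` (a differential
graded Poisson algebra structure with zero differential, with the induced grading,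
product and bracket). -/
def IsCohomDGPA (P : DGPAOn k M) (R : DGPAOn k (Cohom P)) : Prop :=
  R.d = 0 ∧
  (∀ n : ℤ, R.gr n =
    Submodule.map (cohCls P) (Submodule.comap (Cocycles P).subtype (P.gr n))) ∧
  (∀ h : P.one ∈ Cocycles P, R.one = cohCls P ⟨P.one, h⟩) ∧
  (∀ (a b : Cocycles P) (h : P.mul (a : M) (b : M) ∈ Cocycles P),
    R.mul (cohCls P a) (cohCls P b) = cohCls P ⟨P.mul (a : M) (b : M), h⟩) ∧
  (∀ (a b : Cocycles P) (h : P.br (a : M) (b : M) ∈ Cocycles P),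
    R.br (cohCls P a) (cohCls P b) = cohCls P ⟨P.br (a : M) (b : M), h⟩)

end IdealsQuotients

end Defs

section ModuleDefs

variable {k : Type u} [Field k]

/-- A left differential graded module structure on `X` over the differential graded
algebra `E`. -/
structure DGModOn {N : Type u} [AddCommGroup N] [Module k N] (E : DGAOn k N)
    (X : Type u) [AddCommGroup X] [Module k X] where
  grm : ℤ → Submodule k X
  decomp : DirectSum.Decomposition grm
  act : N →ₗ[k] X →ₗ[k] X
  act_one : ∀ x : X, act E.one x = x
  act_mul : ∀ (r s : N) (x : X), act (E.mul r s) x = act r (act s x)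
  act_mem : ∀ {i j : ℤ} {r : N} {x : X}, r ∈ E.gr i → x ∈ grm j → act r x ∈ grm (i + j)
  dm : X →ₗ[k] X
  dm_mem : ∀ {i : ℤ} {x : X}, x ∈ grm i → dm x ∈ grm (i + 1)
  dm_sq : ∀ x : X, dm (dm x) = 0
  dm_act : ∀ {i : ℤ} {r : N}, r ∈ E.gr i → ∀ x : X,
    dm (act r x) = act (E.d r) x + ((-1 : k) ^ i) • act r (dm x)

/-- A left differential graded Poisson module structure on `X` over the differential
graded Poisson algebra `P`. -/
structure DGPModOn {M : Type u} [AddCommGroup M] [Module k M] (P : DGPAOn k M)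
    (X : Type u) [AddCommGroup X] [Module k X] where
  grm : ℤ → Submodule k X
  decomp : DirectSum.Decomposition grm
  act : M →ₗ[k] X →ₗ[k] X
  act_one : ∀ x : X, act P.one x = x
  act_mul : ∀ (a b : M) (x : X), act (P.mul a b) x = act a (act b x)
  act_mem : ∀ {i j : ℤ} {a : M} {x : X}, a ∈ P.gr i → x ∈ grm j → act a x ∈ grm (i + j)
  dm : X →ₗ[k] X
  dm_mem : ∀ {i : ℤ} {x : X}, x ∈ grm i → dm x ∈ grm (i + 1)
  dm_sq : ∀ x : X, dm (dm x) = 0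
  dm_act : ∀ {i : ℤ} {a : M}, a ∈ P.gr i → ∀ x : X,
    dm (act a x) = act (P.d a) x + ((-1 : k) ^ i) • act a (dm x)
  bact : M →ₗ[k] X →ₗ[k] X
  bact_mem : ∀ {i j : ℤ} {a : M} {x : X}, a ∈ P.gr i → x ∈ grm j → bact a x ∈ grm (i + j)
  bact_amod : ∀ {i j : ℤ} {a b : M}, a ∈ P.gr i → b ∈ P.gr j → ∀ x : X,
    bact a (act b x) = act (P.br a b) x + ((-1 : k) ^ (i * j)) • act b (bact a x)
  bact_mulact : ∀ {i j : ℤ} {a b : M}, a ∈ P.gr i → b ∈ P.gr j → ∀ x : X,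
    bact (P.mul a b) x = act a (bact b x) + ((-1 : k) ^ (i * j)) • act b (bact a x)
  bact_jacobi : ∀ {i j : ℤ} {a b : M}, a ∈ P.gr i → b ∈ P.gr j → ∀ x : X,
    bact a (bact b x) = bact (P.br a b) x + ((-1 : k) ^ (i * j)) • bact b (bact a x)
  dm_bact : ∀ {i : ℤ} {a : M}, a ∈ P.gr i → ∀ x : X,
    dm (bact a x) = bact (P.d a) x + ((-1 : k) ^ i) • bact a (dm x)

/-- A morphism of left differential graded modules. -/
def IsDGModHom {N X Y : Type u} [AddCommGroup N] [Module k N]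
    [AddCommGroup X] [Module k X] [AddCommGroup Y] [Module k Y]
    {E : DGAOn k N} (W : DGModOn E X) (W' : DGModOn E Y) (f : X →ₗ[k] Y) : Prop :=
  (∀ {n : ℤ} {x : X}, x ∈ W.grm n → f x ∈ W'.grm n) ∧
  (∀ x : X, f (W.dm x) = W'.dm (f x)) ∧
  (∀ (r : N) (x : X), f (W.act r x) = W'.act r (f x))

/-- A morphism of left differential graded Poisson modules. -/
def IsDGPModHom {M X Y : Type u} [AddCommGroup M] [Module k M]
    [AddCommGroup X] [Module k X] [AddCommGroup Y] [Module k Y]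
    {P : DGPAOn k M} (V : DGPModOn P X) (V' : DGPModOn P Y) (f : X →ₗ[k] Y) : Prop :=
  (∀ {n : ℤ} {x : X}, x ∈ V.grm n → f x ∈ V'.grm n) ∧
  (∀ x : X, f (V.dm x) = V'.dm (f x)) ∧
  (∀ (a : M) (x : X), f (V.act a x) = V'.act a (f x)) ∧
  (∀ (a : M) (x : X), f (V.bact a x) = V'.bact a (f x))

/-- The correspondence between a differential graded Poisson module structure over `P`
and a differential graded module structure over `A^e` on the same space. -/
def ModCorr {M X : Type u} [AddCommGroup M] [Module k M] [AddCommGroup X] [Module k X]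
    {P : DGPAOn k M} {E : DGAOn k (Env P)}
    (V : DGPModOn P X) (W : DGModOn E X) : Prop :=
  W.grm = V.grm ∧ W.dm = V.dm ∧
  (∀ (a : M) (x : X), W.act (mgen P a) x = V.act a x) ∧
  (∀ (a : M) (x : X), W.act (hgen P a) x = V.bact a x)

end ModuleDefs

/-!
The map `φ` out of `A^e` exists, is multiplicative and is unique because `A^e` is presented by
generators and relations. That `φ` preserves degrees and commutes with the differentials need only
be tested on homogeneous generators: the spaces `C n` of degree-`n` elements on which `φ` does both
satisfy `1 ∈ C 0` and `C i * C j ⊆ C (i + j)`, so their sum is a subalgebra. If that subalgebra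
contains generators it is everything, and as the grading is a direct sum, each `C n` is then the
whole degree-`n` component.
-/

theorem iSup_eq_top_of_adjoin_eq_top {ι R B : Type*} [AddMonoid ι] [CommSemiring R] [Semiring B]
    [Algebra R B] (C : ι → Submodule R B) [SetLike.GradedMonoid C] {s : Set B}
    (hs : Algebra.adjoin R s = ⊤) (hC : ∀ x ∈ s, ∃ i, x ∈ C i) : ⨆ i, C i = ⊤ := by
  classical
  rw [Submodule.iSup_eq_toSubmodule_range, Algebra.toSubmodule_eq_top, eq_top_iff, ← hs,
    Algebra.adjoin_le_iff]
  intro x hx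
  obtain ⟨i, hi⟩ := hC x hx
  exact ⟨DirectSum.of (fun i => C i) i ⟨x, hi⟩, DirectSum.coeAlgHom_of C i ⟨x, hi⟩⟩

section DGA

variable {k : Type u} [Field k] {N N' : Type u} [AddCommGroup N] [Module k N] [AddCommGroup N']
  [Module k N']

/-- The underlying space `N` of a differential graded algebra `D`, as a type synonym depending on
`D` so that the product of `D` makes it a `k`-algebra in the sense of Mathlib. -/
def DGAOn.Carrier (_ : DGAOn k N) : Type u := N

namespace DGAOn

variable (D : DGAOn k N)

instance : AddCommGroup D.Carrier := inferInstanceAs (AddCommGroup N)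

instance : Module k D.Carrier := inferInstanceAs (Module k N)

instance : Ring D.Carrier where
  __ := (inferInstance : AddCommGroup D.Carrier)
  mul x y := D.mul x y
  one := D.one
  mul_assoc := D.mul_assoc
  one_mul := D.one_mul
  mul_one := D.mul_one
  left_distrib x := map_add (D.mul x)
  right_distrib := D.mul.map_add₂
  zero_mul := D.mul.map_zero₂
  mul_zero x := map_zero (D.mul x)

instance : Algebra k D.Carrier :=
  Algebra.ofModule D.mul.map_smul₂ fun r x => map_smul (D.mul x) r

/-- The grading of `D`, as a family of subspaces of the algebra `D.Carrier`. -/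
def grading : ℤ → Submodule k D.Carrier := D.gr

/-- The differential of `D`, as an endomorphism of the algebra `D.Carrier`. -/
def differential : D.Carrier →ₗ[k] D.Carrier := D.d

instance : SetLike.GradedMonoid D.grading where
  one_mem := D.one_mem
  mul_mem _ _ _ _ := D.mul_mem

theorem iSupIndep_grading : iSupIndep D.grading :=
  letI : DirectSum.Decomposition D.grading := D.decomp
  (DirectSum.Decomposition.isInternal D.grading).submodule_iSupIndep

variable {D}

theorem differential_mul {i j : ℤ} {x y : D.Carrier} (hx : x ∈ D.grading i)
    (hy : y ∈ D.grading j) :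
    D.differential (x * y) = D.differential x * y + (-1 : k) ^ i • (x * D.differential y) :=
  D.d_mul hx hy

theorem differential_one : D.differential 1 = 0 := by
  have leibniz := differential_mul (SetLike.GradedOne.one_mem (A := D.grading))
    (SetLike.GradedOne.one_mem (A := D.grading))
  rw [_root_.mul_one, _root_.mul_one, _root_.one_mul, zpow_zero, one_smul] at leibniz
  exact left_eq_add.mp leibniz

end DGAOn

variable {E : DGAOn k N} {D : DGAOn k N'}

/-- The degree-`n` elements of `E` which `φ` sends to degree `n` and on which `φ` commutes with the
differentials. -/
def dgCompatible (φ : E.Carrier →ₐ[k] D.Carrier) (n : ℤ) : Submodule k E.Carrier :=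
  E.grading n ⊓ (D.grading n).comap φ.toLinearMap ⊓
    LinearMap.eqLocus (φ.toLinearMap ∘ₗ E.differential) (D.differential ∘ₗ φ.toLinearMap)

theorem mem_dgCompatible {φ : E.Carrier →ₐ[k] D.Carrier} {n : ℤ} {x : E.Carrier} :
    x ∈ dgCompatible φ n ↔ x ∈ E.grading n ∧ φ x ∈ D.grading n ∧
      φ (E.differential x) = D.differential (φ x) :=
  and_assoc

instance (φ : E.Carrier →ₐ[k] D.Carrier) : SetLike.GradedMonoid (dgCompatible φ) where
  one_mem := by
    rw [mem_dgCompatible, map_one, DGAOn.differential_one, DGAOn.differential_one]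
    exact ⟨SetLike.GradedOne.one_mem, SetLike.GradedOne.one_mem, map_zero φ⟩
  mul_mem i j x y hx hy := by
    obtain ⟨hxE, hxD, hdx⟩ := mem_dgCompatible.mp hx
    obtain ⟨hyE, hyD, hdy⟩ := mem_dgCompatible.mp hy
    rw [mem_dgCompatible, map_mul, DGAOn.differential_mul hxE hyE, DGAOn.differential_mul hxD hyD,
      map_add, map_smul, map_mul, map_mul, hdx, hdy]
    exact ⟨SetLike.mul_mem_graded hxE hyE, SetLike.mul_mem_graded hxD hyD, rfl⟩

theorem isDGAHom_of_adjoin_eq_top (φ : E.Carrier →ₐ[k] D.Carrier) {s : Set E.Carrier}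
    (hs : Algebra.adjoin k s = ⊤) (hφ : ∀ x ∈ s, ∃ n, x ∈ dgCompatible φ n) :
    IsDGAHom E D φ.toLinearMap := by
  have iSup_eq_top : ⨆ n, dgCompatible φ n = ⊤ := iSup_eq_top_of_adjoin_eq_top _ hs hφ
  have le_grading : dgCompatible φ ≤ E.grading := fun _ _ hx => (mem_dgCompatible.mp hx).1
  have eq_grading : dgCompatible φ = E.grading :=
    (E.iSupIndep_grading.le_iff_eq_of_iSup_eq_top iSup_eq_top).mp le_grading
  have top_le_eqLocus : ⊤ ≤ LinearMap.eqLocus (φ.toLinearMap ∘ₗ E.differential)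
      (D.differential ∘ₗ φ.toLinearMap) :=
    iSup_eq_top ▸ iSup_le fun _ => inf_le_right
  refine ⟨fun {n x} hx => ?_, map_mul φ, map_one φ, fun x => top_le_eqLocus (x := x) trivial⟩
  have hx' : x ∈ dgCompatible φ n := eq_grading ▸ hx
  exact (mem_dgCompatible.mp hx').2.1

/-- A morphism of differential graded algebras, as a homomorphism of the underlying algebras. -/
def IsDGAHom.toAlgHom {φ : N →ₗ[k] N'} (hφ : IsDGAHom E D φ) : E.Carrier →ₐ[k] D.Carrier :=
  AlgHom.ofLinearMap (A := E.Carrier) (B := D.Carrier) φ hφ.2.2.1 hφ.2.1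

theorem IsDGAHom.eq_of_eqOn {φ ψ : N →ₗ[k] N'} (hφ : IsDGAHom E D φ) (hψ : IsDGAHom E D ψ)
    {s : Set E.Carrier} (hs : Algebra.adjoin k s = ⊤) (h : Set.EqOn φ ψ s) : φ = ψ := by
  have toAlgHom_eq : hφ.toAlgHom = hψ.toAlgHom := AlgHom.ext_of_adjoin_eq_top hs h
  exact LinearMap.ext fun x => DFunLike.congr_fun toAlgHom_eq x

end DGA

section Presentation

variable {k : Type u} [Field k] {M : Type u} [AddCommGroup M] [Module k M] {P : DGPAOn k M}

/-- The pair `f, g : A → B` satisfies the defining relations of `A^e`, with `f a` in place of `m_a`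
and `g a` in place of `h_a`; here `B` is an ungraded algebra. -/
structure EnvRelations (P : DGPAOn k M) {B : Type*} [Ring B] [Algebra k B] (f g : M →ₗ[k] B) :
    Prop where
  f_one : f P.one = 1
  f_mul (a b : M) : f (P.mul a b) = f a * f b
  g_mul {i j : ℤ} {a b : M} (ha : a ∈ P.gr i) (hb : b ∈ P.gr j) :
    g (P.mul a b) = f a * g b + (-1 : k) ^ (i * j) • (f b * g a)
  f_br {i j : ℤ} {a b : M} (ha : a ∈ P.gr i) (hb : b ∈ P.gr j) :
    f (P.br a b) = g a * f b - (-1 : k) ^ (i * j) • (f b * g a)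
  g_br {i j : ℤ} {a b : M} (ha : a ∈ P.gr i) (hb : b ∈ P.gr j) :
    g (P.br a b) = g a * g b - (-1 : k) ^ (i * j) • (g b * g a)

theorem DGPAOn.iSup_gr (P : DGPAOn k M) : ⨆ n, P.gr n = ⊤ :=
  letI := P.decomp
  (DirectSum.Decomposition.isInternal P.gr).submodule_iSup_eq_top

namespace Env

theorem mkAlgHom_ι (P : DGPAOn k M) (z : M × M) :
    RingQuot.mkAlgHom k (EnvRel P) (TensorAlgebra.ι k z) = mgen P z.1 + hgen P z.2 := by
  simp [mgen, hgen, ← map_add]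

theorem envRelations_mgen_hgen (P : DGPAOn k M) : EnvRelations P (mgen P) (hgen P) where
  f_one := by simpa [mkAlgHom_ι] using RingQuot.mkAlgHom_rel k (EnvRel.relone (P := P))
  f_mul a b := by simpa [mkAlgHom_ι] using RingQuot.mkAlgHom_rel k (EnvRel.relmul (P := P) a b)
  g_mul ha hb := by simpa [mkAlgHom_ι] using RingQuot.mkAlgHom_rel k (EnvRel.relhmul ha hb)
  f_br ha hb := by simpa [mkAlgHom_ι] using RingQuot.mkAlgHom_rel k (EnvRel.relmbr ha hb)
  g_br ha hb := by simpa [mkAlgHom_ι] using RingQuot.mkAlgHom_rel k (EnvRel.relhbr ha hb)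

theorem adjoin_range_mgen_union_range_hgen (P : DGPAOn k M) :
    Algebra.adjoin k (Set.range (mgen P) ∪ Set.range (hgen P)) = ⊤ := by
  have surjective_mk := RingQuot.mkAlgHom_surjective k (EnvRel P)
  rw [eq_top_iff, ← (AlgHom.range_eq_top _).mpr surjective_mk, ← Algebra.map_top,
    ← TensorAlgebra.adjoin_range_ι, AlgHom.map_adjoin, Algebra.adjoin_le_iff]
  rintro _ ⟨_, ⟨z, rfl⟩, rfl⟩
  rw [SetLike.mem_coe, mkAlgHom_ι]
  exact add_mem (Algebra.subset_adjoin <| .inl ⟨_, rfl⟩) (Algebra.subset_adjoin <| .inr ⟨_, rfl⟩)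

/-- The generators `m_a` and `h_a` of `A^e` with `a` homogeneous. -/
def homogeneousGenerators (P : DGPAOn k M) : Set (Env P) :=
  ⋃ n, mgen P '' P.gr n ∪ hgen P '' P.gr n

theorem adjoin_homogeneousGenerators (P : DGPAOn k M) :
    Algebra.adjoin k (homogeneousGenerators P) = ⊤ := by
  set S := Algebra.adjoin k (homogeneousGenerators P)
  have range_le (u : M →ₗ[k] Env P) (hu : ∀ n, u '' P.gr n ⊆ homogeneousGenerators P) :
      Set.range u ⊆ S := by
    have top_le_comap : ⊤ ≤ (Subalgebra.toSubmodule S).comap u :=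
      P.iSup_gr ▸ iSup_le fun n _ ha => Algebra.subset_adjoin (hu n ⟨_, ha, rfl⟩)
    rintro _ ⟨a, rfl⟩
    exact top_le_comap (x := a) trivial
  rw [eq_top_iff, ← adjoin_range_mgen_union_range_hgen, Algebra.adjoin_le_iff]
  exact Set.union_subset
    (range_le _ fun n => Set.subset_iUnion_of_subset n Set.subset_union_left)
    (range_le _ fun n => Set.subset_iUnion_of_subset n Set.subset_union_right)

section Lift

variable {B : Type*} [Ring B] [Algebra k B] {f g : M →ₗ[k] B}

theorem lift_coprod_eq_of_envRel (h : EnvRelations P f g) ⦃x y : TensorAlgebra k (M × M)⦄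
    (hxy : EnvRel P x y) :
    TensorAlgebra.lift k (f.coprod g) x = TensorAlgebra.lift k (f.coprod g) y := by
  cases hxy with
  | relone => simpa using h.f_one
  | relmul a b => simpa using h.f_mul a b
  | relhmul ha hb => simpa using h.g_mul ha hb
  | relmbr ha hb => simpa using h.f_br ha hb
  | relhbr ha hb => simpa using h.g_br ha hb

/-- The algebra homomorphism `A^e → B` determined by the images of the generators. -/
def lift (h : EnvRelations P f g) : Env P →ₐ[k] B :=
  RingQuot.liftAlgHom k ⟨TensorAlgebra.lift k (f.coprod g), lift_coprod_eq_of_envRel h⟩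

theorem lift_mgen (h : EnvRelations P f g) (a : M) : lift h (mgen P a) = f a := by
  simp [lift, mgen]

theorem lift_hgen (h : EnvRelations P f g) (a : M) : lift h (hgen P a) = g a := by
  simp [lift, hgen]

end Lift

end Env

end Presentation

section UniversalProperty

variable {k : Type u} [Field k] {M N : Type u} [AddCommGroup M] [Module k M] [AddCommGroup N]
  [Module k N] {P : DGPAOn k M} {E : DGAOn k (Env P)} {D : DGAOn k N} {f g : M →ₗ[k] N}

theorem UEPair.envRelations (h : UEPair P D f g) : EnvRelations P (B := D.Carrier) f g := by
  obtain ⟨-, -, f_mul, f_one, -, -, g_br, f_br, g_mul⟩ := h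
  exact ⟨f_one, f_mul, g_mul, f_br, g_br⟩

namespace IsEnvDGA

theorem uePair (hE : IsEnvDGA P E) : UEPair P E (mgen P) (hgen P) := by
  obtain ⟨mul_eq, one_eq, mgen_mem, hgen_mem, d_mgen, d_hgen⟩ := hE
  have rel := Env.envRelations_mgen_hgen P
  simp only [UEPair, mul_eq, one_eq]
  exact ⟨mgen_mem, hgen_mem, rel.f_mul, rel.f_one, fun a => (d_mgen a).symm,
    fun a => (d_hgen a).symm, rel.g_br, rel.f_br, rel.g_mul⟩

/-- The identity of `A^e`, as an isomorphism from the quotient algebra defining `A^e` to the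
algebra underlying the differential graded algebra `E`. -/
def carrierEquiv (hE : IsEnvDGA P E) : Env P ≃ₐ[k] E.Carrier :=
  AlgEquiv.ofLinearEquiv (A₂ := E.Carrier) (LinearEquiv.refl k (Env P)) hE.2.1.symm
    fun x y => (hE.1 x y).symm

theorem adjoin_carrierEquiv_image (hE : IsEnvDGA P E) :
    Algebra.adjoin k (hE.carrierEquiv '' Env.homogeneousGenerators P) = ⊤ := by
  have map_adjoin := AlgHom.map_adjoin hE.carrierEquiv.toAlgHom (Env.homogeneousGenerators P)
  rw [Env.adjoin_homogeneousGenerators, Algebra.map_top] at map_adjoin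
  exact map_adjoin.symm.trans ((AlgHom.range_eq_top _).mpr hE.carrierEquiv.surjective)

/-- The algebra homomorphism `φ : A^e → D` with `φ m_a = f a` and `φ h_a = g a`. -/
def lift (hE : IsEnvDGA P E) (h : UEPair P D f g) : E.Carrier →ₐ[k] D.Carrier :=
  (Env.lift h.envRelations).comp hE.carrierEquiv.symm.toAlgHom

theorem lift_mgen (hE : IsEnvDGA P E) (h : UEPair P D f g) (a : M) :
    hE.lift h (hE.carrierEquiv (mgen P a)) = f a :=
  (congrArg (Env.lift h.envRelations) (hE.carrierEquiv.symm_apply_apply _)).trans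
    (Env.lift_mgen h.envRelations a)

theorem lift_hgen (hE : IsEnvDGA P E) (h : UEPair P D f g) (a : M) :
    hE.lift h (hE.carrierEquiv (hgen P a)) = g a :=
  (congrArg (Env.lift h.envRelations) (hE.carrierEquiv.symm_apply_apply _)).trans
    (Env.lift_hgen h.envRelations a)

theorem differential_mgen (hE : IsEnvDGA P E) (a : M) :
    E.differential (hE.carrierEquiv (mgen P a)) = hE.carrierEquiv (mgen P (P.d a)) :=
  hE.2.2.2.2.1 a

theorem differential_hgen (hE : IsEnvDGA P E) (a : M) :
    E.differential (hE.carrierEquiv (hgen P a)) = hE.carrierEquiv (hgen P (P.d a)) :=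
  hE.2.2.2.2.2 a

theorem mgen_mem_dgCompatible (hE : IsEnvDGA P E) (h : UEPair P D f g) {n : ℤ} {a : M}
    (ha : a ∈ P.gr n) : hE.carrierEquiv (mgen P a) ∈ dgCompatible (hE.lift h) n := by
  rw [mem_dgCompatible, differential_mgen, lift_mgen, lift_mgen]
  exact ⟨hE.2.2.1 ha, h.1 ha, h.2.2.2.2.1 a⟩

theorem hgen_mem_dgCompatible (hE : IsEnvDGA P E) (h : UEPair P D f g) {n : ℤ} {a : M}
    (ha : a ∈ P.gr n) : hE.carrierEquiv (hgen P a) ∈ dgCompatible (hE.lift h) n := by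
  rw [mem_dgCompatible, differential_hgen, lift_hgen, lift_hgen]
  exact ⟨hE.2.2.2.1 ha, h.2.1 ha, h.2.2.2.2.2.1 a⟩

theorem isDGAHom_lift (hE : IsEnvDGA P E) (h : UEPair P D f g) :
    IsDGAHom E D (hE.lift h).toLinearMap := by
  refine isDGAHom_of_adjoin_eq_top _ hE.adjoin_carrierEquiv_image ?_
  rintro _ ⟨x, hx, rfl⟩
  obtain ⟨n, ⟨a, ha, rfl⟩ | ⟨a, ha, rfl⟩⟩ := Set.mem_iUnion.mp hx
  exacts [⟨n, hE.mgen_mem_dgCompatible h ha⟩, ⟨n, hE.hgen_mem_dgCompatible h ha⟩]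

theorem hom_ext (hE : IsEnvDGA P E) {φ ψ : Env P →ₗ[k] N} (hφ : IsDGAHom E D φ)
    (hψ : IsDGAHom E D ψ) (eq_mgen : ∀ a, φ (mgen P a) = ψ (mgen P a))
    (eq_hgen : ∀ a, φ (hgen P a) = ψ (hgen P a)) : φ = ψ := by
  refine hφ.eq_of_eqOn hψ hE.adjoin_carrierEquiv_image ?_
  rintro _ ⟨x, hx, rfl⟩
  obtain ⟨n, ⟨a, -, rfl⟩ | ⟨a, -, rfl⟩⟩ := Set.mem_iUnion.mp hx
  exacts [eq_mgen a, eq_hgen a]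

end IsEnvDGA

end UniversalProperty

/-- `A^e`, together with the differential graded algebra map `m : a ↦ m_a`
and the differential graded Lie algebra map `h : a ↦ h_a`, is a universal enveloping
algebra of the differential graded Poisson algebra `A`. -/
theorem stmt_14 (k : Type u) [Field k] (M : Type u) [AddCommGroup M] [Module k M]
    (P : DGPAOn k M) (E : DGAOn k (Env P)) (hE : IsEnvDGA P E) :
    IsUEnv P E (mgen P) (hgen P) := by
  refine ⟨hE.uePair, fun N _ _ D f g h => ?_⟩
  refine ⟨(hE.lift h).toLinearMap, ⟨hE.isDGAHom_lift h, hE.lift_mgen h, hE.lift_hgen h⟩, ?_⟩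
  rintro ψ ⟨hψ, ψ_mgen, ψ_hgen⟩
  exact hE.hom_ext hψ (hE.isDGAHom_lift h) (fun a => (ψ_mgen a).trans (hE.lift_mgen h a).symm)
    fun a => (ψ_hgen a).trans (hE.lift_hgen h a).symm

end DGPaper

end
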